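/- arXiv:0804.1397 — 5 statements merged into one kernel-verified Lean document; each statement's English description precedes it below -/
import Mathlib

section
/- Let μ be a probability mass function on the nonnegative integers with finite mean ρ = Σ_k k·μ(k) and finite, strictly positive variance σ² = Σ_k (k−ρ)²·μ(k). Define μ̂(k) = σ^{-2} · Σ_{y=k+1}^{∞} (y−ρ)·μ(y). Then μ̂(k) ≥ 0 for every nonnegative integer k and Σ_{k=0}^{∞} μ̂(k) = 1; that is, μ̂ is again a probability mass function on the nonnegative integers. -/
/-!
Write `f y = (y - ρ) * μ y`. Since `∑ f = 0` and `f` passes from nonpositive to nonnegative at `ρ`,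
each tail `∑_{y > k} f y` either has only nonnegative terms or arises from the zero total by
dropping only nonpositive ones. Interchanging the order of summation gives
`∑_k ∑_{y > k} f y = ∑_y y * f y`, and `∑_y y * f y = ∑_y (y - ρ) * f y = σ²` because
`∑_y ρ * f y = 0`.
-/

section Moments

variable {ι R : Type*} [CommRing R] [TopologicalSpace R] [IsTopologicalRing R]
  {X μ : ι → R} {ρ : R}

theorem hasSum_sub_mean_mul (hμ : HasSum μ 1) (hmean : HasSum (fun i => X i * μ i) ρ) :
    HasSum (fun i => (X i - ρ) * μ i) 0 := by
  simpa only [sub_mul, mul_one, sub_self] using hmean.sub (hμ.mul_left ρ)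

theorem hasSum_mul_sub_mean_mul {v : R} (hcentered : HasSum (fun i => (X i - ρ) * μ i) 0)
    (hvar : HasSum (fun i => (X i - ρ) ^ 2 * μ i) v) :
    HasSum (fun i => X i * ((X i - ρ) * μ i)) v := by
  have h : HasSum (fun i => (X i - ρ) ^ 2 * μ i + ρ * ((X i - ρ) * μ i)) v := by
    simpa only [mul_zero, add_zero] using hvar.add (hcentered.mul_left ρ)
  exact h.congr_fun fun i => by ring

end Moments

theorem tsum_ite_nonneg_of_nonneg_or_nonpos {ι α : Type*} [AddCommGroup α] [PartialOrder α]
    [IsOrderedAddMonoid α] [UniformSpace α] [IsUniformAddGroup α] [CompleteSpace α]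
    [OrderClosedTopology α] {p : ι → Prop} [DecidablePred p] {f : ι → α}
    (hf : Summable f) (htotal : 0 ≤ ∑' i, f i)
    (hsign : (∀ i, p i → 0 ≤ f i) ∨ ∀ i, ¬p i → f i ≤ 0) :
    0 ≤ ∑' i, if p i then f i else 0 := by
  rcases hsign with hnonneg | hnonpos
  · refine tsum_nonneg fun i => ?_
    split_ifs with hi
    exacts [hnonneg i hi, le_rfl]
  · have hrestrict : Summable fun i => if p i then f i else 0 :=
      (hf.indicator {i | p i}).congr fun i => by simp [Set.indicator_apply]
    refine htotal.trans (hf.tsum_le_tsum (fun i => ?_) hrestrict)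
    split_ifs with hi
    exacts [le_rfl, hnonpos i hi]

theorem hasSum_ite_lt_nsmul {M : Type*} [AddCommMonoid M] [TopologicalSpace M] (n : ℕ) (a : M) :
    HasSum (fun k => if k < n then a else 0) (n • a) := by
  have hcount : ∑ k ∈ Finset.range n, (if k < n then a else 0) = n • a := by
    rw [Finset.sum_ite_of_true fun k hk => Finset.mem_range.mp hk, Finset.sum_const,
      Finset.card_range]
  rw [← hcount]
  exact hasSum_sum_of_ne_finset_zero fun k hk => if_neg (mt Finset.mem_range.mpr hk)

section TailSums

variable {E : Type*} [NormedAddCommGroup E] [CompleteSpace E] {f : ℕ → E}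

theorem summable_ite_lt_of_summable_mul_norm (hf : Summable fun n : ℕ => (n : ℝ) * ‖f n‖) :
    Summable fun p : ℕ × ℕ => if p.2 < p.1 then f p.1 else 0 := by
  have hrow (n : ℕ) : HasSum (fun k => ‖if k < n then f n else 0‖) ((n : ℝ) * ‖f n‖) := by
    simpa only [apply_ite norm, norm_zero, nsmul_eq_mul] using hasSum_ite_lt_nsmul n ‖f n‖
  refine .of_norm ((summable_prod_of_nonneg fun p => norm_nonneg _).mpr
    ⟨fun n => (hrow n).summable, ?_⟩)
  simpa only [(hrow _).tsum_eq] using hf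

theorem hasSum_tsum_ite_lt (hf : Summable fun n : ℕ => (n : ℝ) * ‖f n‖) :
    HasSum (fun k => ∑' n, if k < n then f n else 0) (∑' n, n • f n) := by
  have hsummable := summable_ite_lt_of_summable_mul_norm hf
  have hswap : ∑' k, ∑' n, (if k < n then f n else 0) = ∑' n, n • f n := by
    rw [Summable.tsum_comm (f := fun n k => if k < n then f n else 0) hsummable]
    exact tsum_congr fun n => (hasSum_ite_lt_nsmul n (f n)).tsum_eq
  rw [← hswap]
  exact hsummable.prod_symm.prod.hasSum

end TailSums

/-- If `μ` is a probability mass function on the nonnegative integers with finite mean `rho`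
and finite, strictly positive variance `σ²`, then
`μ̂ k = σ⁻² * ∑_{y > k} (y - rho) * μ y` is again a probability mass function:
it is nonnegative and sums to `1`. -/
theorem hat_measure_is_probability
    (μ : ℕ → ℝ) (hμ : ∀ k, 0 ≤ μ k) (hsum : HasSum μ 1)
    (rho σ2 : ℝ) (hσ2 : 0 < σ2)
    (hmean : HasSum (fun k : ℕ => (k : ℝ) * μ k) rho)
    (hvar : HasSum (fun k : ℕ => ((k : ℝ) - rho) ^ 2 * μ k) σ2) :
    (∀ k : ℕ,
      0 ≤ σ2⁻¹ * ∑' y : ℕ, (if k < y then ((y : ℝ) - rho) * μ y else 0)) ∧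
    HasSum (fun k : ℕ =>
      σ2⁻¹ * ∑' y : ℕ, (if k < y then ((y : ℝ) - rho) * μ y else 0)) 1 := by
  have hcentered := hasSum_sub_mean_mul hsum hmean
  have hmoment := hasSum_mul_sub_mean_mul hcentered hvar
  constructor
  · intro k
    refine mul_nonneg (inv_nonneg.mpr hσ2.le)
      (tsum_ite_nonneg_of_nonneg_or_nonpos hcentered.summable hcentered.tsum_eq.ge ?_)
    refine (le_total rho k).imp (fun hk y hy => ?_) (fun hk y hy => ?_)
    · have hy' : rho ≤ y := hk.trans (Nat.cast_le.mpr hy.le)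
      exact mul_nonneg (sub_nonneg.mpr hy') (hμ y)
    · have hy' : (y : ℝ) ≤ rho := (Nat.cast_le.mpr (not_lt.mp hy)).trans hk
      exact mul_nonpos_of_nonpos_of_nonneg (sub_nonpos.mpr hy') (hμ y)
  · have habs : Summable fun y : ℕ => (y : ℝ) * ‖((y : ℝ) - rho) * μ y‖ := by
      simpa only [norm_mul, Real.norm_natCast] using hmoment.summable.norm
    have htails := hasSum_tsum_ite_lt habs
    simp only [nsmul_eq_mul, hmoment.tsum_eq] at htails
    simpa only [inv_mul_cancel₀ hσ2.ne'] using htails.mul_left σ2⁻¹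
end

section
/- For every real ρ > 0 and every nonnegative integer k, (1/(ρ(1+ρ))) · Σ_{y=k+1}^{∞} (y−ρ)·(ρ/(1+ρ))^y·(1/(1+ρ)) = (k+1)·(ρ/(1+ρ))^k·(1/(1+ρ))². In particular, the measure μ̂_ρ associated to the geometric distribution μ_ρ (whose variance is ρ(1+ρ)) is the negative binomial distribution with parameters 2 and success probability 1/(1+ρ). -/
/-!
With `r = ρ / (1 + ρ)`, so that `1 / (1 + ρ) = 1 - r` and `ρ * (1 - r) = r`, the summand telescopes:
`(y - ρ) * r ^ y * (1 - r) = y * r ^ y - (y + 1) * r ^ (y + 1)`.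
Its sum over `y > k` is therefore `(k + 1) * r ^ (k + 1)`.
-/

section Series

variable {G : Type*} [AddCommGroup G] [TopologicalSpace G]

theorem hasSum_ite_lt_iff {f : ℕ → G} {a : G} (k : ℕ) :
    HasSum (fun n ↦ if k < n then f n else 0) a ↔ HasSum (fun n ↦ f (n + (k + 1))) a := by
  have eq_zero_of_notMem_range :
      ∀ n ∉ Set.range (· + (k + 1)), (if k < n then f n else 0) = 0 :=
    fun n hn ↦ if_neg fun hkn ↦ hn ⟨n - (k + 1), Nat.sub_add_cancel hkn⟩
  rw [← (add_left_injective (k + 1)).hasSum_iff eq_zero_of_notMem_range]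
  refine iff_of_eq (congrArg (HasSum · a) (funext fun n ↦ if_pos ?_))
  lia

theorem hasSum_sub_succ_of_summable [IsTopologicalAddGroup G] {f : ℕ → G} (hf : Summable f) :
    HasSum (fun n ↦ f n - f (n + 1)) (f 0) := by
  have shifted : HasSum (fun n ↦ f (n + 1)) (∑' n, f n - f 0) := by
    simpa only [Finset.sum_range_one] using (hasSum_nat_add_iff' 1).mpr hf.hasSum
  simpa only [sub_sub_cancel] using hf.hasSum.sub shifted

theorem hasSum_ite_lt_sub_succ_of_summable [IsTopologicalAddGroup G] {f : ℕ → G}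
    (hf : Summable f) (k : ℕ) :
    HasSum (fun n ↦ if k < n then f n - f (n + 1) else 0) (f (k + 1)) := by
  rw [hasSum_ite_lt_iff]
  have tail : Summable fun n ↦ f (n + (k + 1)) := (summable_nat_add_iff (k + 1)).mpr hf
  simpa only [zero_add, add_right_comm] using hasSum_sub_succ_of_summable tail

end Series

theorem sub_mul_geometric_eq_sub_succ {K : Type*} [Field K] {rho : K} (h : 1 + rho ≠ 0) (n : ℕ) :
    (n - rho) * (rho / (1 + rho)) ^ n * (1 / (1 + rho)) =
      n * (rho / (1 + rho)) ^ n - (n + 1 : ℕ) * (rho / (1 + rho)) ^ (n + 1) := by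
  rw [pow_succ]
  push_cast
  field_simp
  ring

theorem hasSum_ite_lt_sub_mul_geometric {𝕜 : Type*} [NormedField 𝕜] {rho : 𝕜}
    (h : ‖rho‖ < ‖1 + rho‖) (k : ℕ) :
    HasSum (fun y : ℕ ↦
        if k < y then (y - rho) * (rho / (1 + rho)) ^ y * (1 / (1 + rho)) else 0)
      ((k + 1) * (rho / (1 + rho)) ^ (k + 1)) := by
  have norm_pos : 0 < ‖1 + rho‖ := (norm_nonneg rho).trans_lt h
  have ratio_lt_one : ‖rho / (1 + rho)‖ < 1 := by rwa [norm_div, div_lt_one norm_pos]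
  have summable := (hasSum_coe_mul_geometric_of_norm_lt_one ratio_lt_one).summable
  simpa only [sub_mul_geometric_eq_sub_succ (norm_pos_iff.mp norm_pos), Nat.cast_succ]
    using hasSum_ite_lt_sub_succ_of_summable summable k

theorem hat_mu_of_geometric_eq_negBinomial_general {𝕜 : Type*} [NormedField 𝕜]
    (rho : 𝕜) (rho_ne_zero : rho ≠ 0) (h : ‖rho‖ < ‖1 + rho‖) (k : ℕ) :
    (1 / (rho * (1 + rho))) *
        ∑' y : ℕ,
          (if k < y then ((y : 𝕜) - rho) * (rho / (1 + rho)) ^ y * (1 / (1 + rho)) else 0) =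
      ((k : 𝕜) + 1) * (rho / (1 + rho)) ^ k * (1 / (1 + rho)) ^ 2 := by
  have one_add_ne_zero : 1 + rho ≠ 0 := norm_pos_iff.mp ((norm_nonneg rho).trans_lt h)
  rw [(hasSum_ite_lt_sub_mul_geometric h k).tsum_eq, pow_succ]
  field_simp

/-- For the geometric distribution `μ_rho` (mean `rho`, variance `rho*(1+rho)`), the
associated measure `μ̂_rho(k) = (rho(1+rho))⁻¹ ∑_{y>k} (y-rho) μ_rho(y)` equals the
negative binomial distribution with parameters `2` and success probability `1/(1+rho)`. -/
theorem hat_mu_of_geometric_eq_negBinomial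
    (rho : ℝ) (hrho : 0 < rho) (k : ℕ) :
    (1 / (rho * (1 + rho))) *
        ∑' y : ℕ,
          (if k < y then ((y : ℝ) - rho) * (rho / (1 + rho)) ^ y * (1 / (1 + rho)) else 0) =
      ((k : ℝ) + 1) * (rho / (1 + rho)) ^ k * (1 / (1 + rho)) ^ 2 := by
  have norm_lt : ‖rho‖ < ‖1 + rho‖ := by
    simpa only [Real.norm_of_nonneg, hrho.le, add_nonneg, zero_le_one] using lt_one_add rho
  exact hat_mu_of_geometric_eq_negBinomial_general rho hrho.ne' norm_lt k
end

section
/- Let 0 < λ < ρ, let u ≥ 1 and d ≥ 0 be integers, and let 0 < α < (1/4)·log((1+λ)/λ). Let Y, Z, W be random variables on a common probability space (with arbitrary joint distribution) whose marginal distributions are: Y negative binomial with parameters 2u−1 and 1/(1+ρ), Z negative binomial with parameters 2u−1 and 1/(1+λ), and W negative binomial with parameters 2 and 1/(1+λ). Then P(Y − Z − W < u(ρ−λ) + d) ≤ exp(α·u·(ρ−λ) + d·α) · (1 + ρ(1 − e^{−4α}))^{−(2u−1)/4} · (1 + λ(1 − e^{4α}))^{−(2u−1)/4} · (1 + λ(1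 − e^{2α}))^{−1}. -/
open MeasureTheory ProbabilityTheory ENNReal

/-- The negative binomial probability mass function with parameters `n` and success
probability `1/(1+lam)` (so failure probability `lam/(1+lam)`). -/
noncomputable def negBinPMF (n : ℕ) (lam : ℝ) (z : ℕ) : ℝ :=
  (Nat.choose (n + z - 1) (n - 1) : ℝ) * (lam / (1 + lam)) ^ z * (1 / (1 + lam)) ^ n

/-! By Markov's inequality, `P(Y - Z - W < t) ≤ E exp(α (t - Y + Z + W))`. Hölder's inequality with
weights `1/4, 1/4, 1/2` needs no independence and bounds this by powers of the exponential moments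
of `Y`, `Z` and `W` at `-4α`, `4α` and `2α`; these are instances of the negative binomial series
`∑ C(k + n, n) xᵏ = (1 - x)⁻⁽ⁿ⁺¹⁾`. -/

lemma hasSum_negBinPMF_mul_pow {n : ℕ} (hn : n ≠ 0) {lam r : ℝ} (hr : |lam * r| < |1 + lam|) :
    HasSum (fun z : ℕ => negBinPMF n lam z * r ^ z) ((1 + lam * (1 - r))⁻¹ ^ n) := by
  obtain ⟨m, rfl⟩ := Nat.exists_eq_add_one_of_ne_zero hn
  have h0 : 1 + lam ≠ 0 := abs_pos.1 ((abs_nonneg _).trans_lt hr)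
  have hlt : ‖lam * r / (1 + lam)‖ < 1 := by
    rwa [norm_div, Real.norm_eq_abs, Real.norm_eq_abs, div_lt_one (abs_pos.2 h0)]
  have hseries := (hasSum_choose_mul_geometric_of_norm_lt_one m hlt).mul_right
    ((1 / (1 + lam)) ^ (m + 1))
  have hterm (z : ℕ) : negBinPMF (m + 1) lam z * r ^ z =
      ((z + m).choose m : ℝ) * (lam * r / (1 + lam)) ^ z * (1 / (1 + lam)) ^ (m + 1) := by
    rw [negBinPMF, show m + 1 + z - 1 = z + m by lia, Nat.add_sub_cancel, mul_div_right_comm,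
      mul_pow]
    ring
  have hsum : (1 + lam * (1 - r))⁻¹ ^ (m + 1) =
      1 / (1 - lam * r / (1 + lam)) ^ (m + 1) * (1 / (1 + lam)) ^ (m + 1) := by
    rw [← one_div_pow, ← mul_pow, div_mul_div_comm, one_mul, one_div, sub_mul,
      div_mul_cancel₀ _ h0]
    ring
  rwa [funext hterm, hsum]

lemma negBinPMF_nonneg (n : ℕ) {lam : ℝ} (hlam : 0 ≤ lam) (z : ℕ) : 0 ≤ negBinPMF n lam z := by
  unfold negBinPMF
  positivity

lemma mul_exp_lt_one_add_of_lt_log {lam β : ℝ} (hlam : 0 < lam)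
    (hβ : β < Real.log ((1 + lam) / lam)) : lam * Real.exp β < 1 + lam := by
  rwa [Real.lt_log_iff_exp_lt (by positivity), lt_div_iff₀' hlam] at hβ

section

variable {Ω : Type*} [MeasurableSpace Ω] {P : Measure Ω}

lemma lintegral_comp_eq_tsum {α : Type*} [Countable α] [MeasurableSpace α]
    [MeasurableSingletonClass α] {X : Ω → α} (hX : AEMeasurable X P) (f : α → ℝ≥0∞) :
    ∫⁻ ω, f (X ω) ∂P = ∑' a, f a * P {ω | X ω = a} := by
  rw [← lintegral_map' (measurable_of_countable f).aemeasurable hX, lintegral_countable']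
  exact tsum_congr fun a => by
    rw [Measure.map_apply_of_aemeasurable hX (measurableSet_singleton a)]
    rfl

lemma lintegral_exp_mul_of_negBinPMF {n : ℕ} (hn : n ≠ 0) {lam β : ℝ} (hlam : 0 ≤ lam)
    (hβ : lam * Real.exp β < 1 + lam) {X : Ω → ℕ} (hX : AEMeasurable X P)
    (hlaw : ∀ k : ℕ, P {ω | X ω = k} = ENNReal.ofReal (negBinPMF n lam k)) :
    ∫⁻ ω, ENNReal.ofReal (Real.exp (β * X ω)) ∂P =
      ENNReal.ofReal ((1 + lam * (1 - Real.exp β)) ^ (-(n : ℝ))) := by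
  have hpgf := hasSum_negBinPMF_mul_pow hn (lam := lam) (r := Real.exp β)
    (by rwa [abs_of_nonneg (by positivity), abs_of_nonneg (by positivity)])
  have hterm (k : ℕ) : ENNReal.ofReal (Real.exp (β * k)) * P {ω | X ω = k} =
      ENNReal.ofReal (negBinPMF n lam k * Real.exp β ^ k) := by
    rw [hlaw, ← ENNReal.ofReal_mul (Real.exp_nonneg _), mul_comm, mul_comm β, Real.exp_nat_mul]
  rw [lintegral_comp_eq_tsum hX fun k : ℕ => ENNReal.ofReal (Real.exp (β * k)), tsum_congr hterm,
    ← ENNReal.ofReal_tsum_of_nonneg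
      (fun k => mul_nonneg (negBinPMF_nonneg n hlam k) (by positivity)) hpgf.summable,
    hpgf.tsum_eq, Real.rpow_neg (by linarith), Real.rpow_natCast, inv_pow]

lemma lintegral_exp_sum_mul_le_prod_rpow {ι : Type*} (s : Finset ι) {f : ι → Ω → ℝ}
    (hf : ∀ i ∈ s, AEMeasurable (f i) P) {p : ι → ℝ} (hp : ∀ i ∈ s, 0 ≤ p i)
    (hp_sum : ∑ i ∈ s, p i = 1) :
    ∫⁻ ω, ENNReal.ofReal (Real.exp (∑ i ∈ s, f i ω * p i)) ∂P ≤
      ∏ i ∈ s, (∫⁻ ω, ENNReal.ofReal (Real.exp (f i ω)) ∂P) ^ p i := by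
  simp only [Real.exp_sum, Real.exp_mul,
    ENNReal.ofReal_prod_of_nonneg fun i _ => Real.rpow_nonneg (Real.exp_nonneg _) (p i),
    ← ENNReal.ofReal_rpow_of_pos (Real.exp_pos _)]
  exact ENNReal.lintegral_prod_norm_pow_le s
    (fun i hi => (Real.measurable_exp.comp_aemeasurable (hf i hi)).ennreal_ofReal) hp_sum hp

lemma measure_lt_le_exp_mul_lintegral_exp {X : Ω → ℝ} (hX : AEMeasurable X P) {α : ℝ} (hα : 0 ≤ α)
    (t : ℝ) :
    P {ω | X ω < t} ≤
      ENNReal.ofReal (Real.exp (α * t)) * ∫⁻ ω, ENNReal.ofReal (Real.exp (-α * X ω)) ∂P := by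
  rw [← lintegral_const_mul' _ _ ENNReal.ofReal_ne_top]
  refine meas_le_lintegral₀ (by fun_prop) fun ω (hω : X ω < t) => ?_
  rw [← ENNReal.ofReal_mul (Real.exp_nonneg _), ← Real.exp_add, ENNReal.one_le_ofReal,
    Real.one_le_exp_iff]
  linarith [mul_le_mul_of_nonneg_left hω.le hα]

lemma lintegral_exp_sub_sub_le {Y Z W : Ω → ℝ} (hY : AEMeasurable Y P) (hZ : AEMeasurable Z P)
    (hW : AEMeasurable W P) (α : ℝ) :
    ∫⁻ ω, ENNReal.ofReal (Real.exp (-α * (Y ω - Z ω - W ω))) ∂P ≤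
      (∫⁻ ω, ENNReal.ofReal (Real.exp (-4 * α * Y ω)) ∂P) ^ (1 / 4 : ℝ) *
      (∫⁻ ω, ENNReal.ofReal (Real.exp (4 * α * Z ω)) ∂P) ^ (1 / 4 : ℝ) *
      (∫⁻ ω, ENNReal.ofReal (Real.exp (2 * α * W ω)) ∂P) ^ (1 / 2 : ℝ) := by
  have hholder := lintegral_exp_sum_mul_le_prod_rpow (P := P) Finset.univ
    (f := ![fun ω => -4 * α * Y ω, fun ω => 4 * α * Z ω, fun ω => 2 * α * W ω])
    (p := ![1 / 4, 1 / 4, 1 / 2])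
    (by
      rintro i -
      fin_cases i
      exacts [hY.const_mul _, hZ.const_mul _, hW.const_mul _])
    (by simp [Fin.forall_fin_succ])
    (by simp only [Fin.sum_univ_three, Matrix.cons_val]; norm_num)
  simp only [Fin.prod_univ_three, Fin.sum_univ_three, Matrix.cons_val] at hholder
  convert hholder using 5
  ring

theorem second_class_density_exponential_bound_general {rho lam mu : ℝ} (hrho : 0 ≤ rho)
    (hlam : 0 ≤ lam) (hmu : 0 ≤ mu) {m n k : ℕ} (hm : m ≠ 0) (hn : n ≠ 0) (hk : k ≠ 0) {α : ℝ}
    (hα : 0 ≤ α) (hlamα : lam * Real.exp (4 * α) < 1 + lam)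
    (hmuα : mu * Real.exp (2 * α) < 1 + mu) {Y Z W : Ω → ℕ} (hY : AEMeasurable Y P)
    (hZ : AEMeasurable Z P) (hW : AEMeasurable W P)
    (hYlaw : ∀ j : ℕ, P {ω | Y ω = j} = ENNReal.ofReal (negBinPMF m rho j))
    (hZlaw : ∀ j : ℕ, P {ω | Z ω = j} = ENNReal.ofReal (negBinPMF n lam j))
    (hWlaw : ∀ j : ℕ, P {ω | W ω = j} = ENNReal.ofReal (negBinPMF k mu j)) (t : ℝ) :
    P {ω | (Y ω : ℝ) - Z ω - W ω < t} ≤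
      ENNReal.ofReal
        (Real.exp (α * t) * (1 + rho * (1 - Real.exp (-4 * α))) ^ (-(m : ℝ) / 4) *
          (1 + lam * (1 - Real.exp (4 * α))) ^ (-(n : ℝ) / 4) *
          (1 + mu * (1 - Real.exp (2 * α))) ^ (-(k : ℝ) / 2)) := by
  have hrhoα : rho * Real.exp (-4 * α) < 1 + rho := by
    have hexp : Real.exp (-4 * α) ≤ 1 := Real.exp_le_one_iff.2 (by linarith)
    linarith [mul_le_mul_of_nonneg_left hexp hrho]
  have hYbase : 0 ≤ 1 + rho * (1 - Real.exp (-4 * α)) := by linarith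
  have hZbase : 0 ≤ 1 + lam * (1 - Real.exp (4 * α)) := by linarith
  have hWbase : 0 ≤ 1 + mu * (1 - Real.exp (2 * α)) := by linarith
  have hYr : AEMeasurable (fun ω => (Y ω : ℝ)) P := by fun_prop
  have hZr : AEMeasurable (fun ω => (Z ω : ℝ)) P := by fun_prop
  have hWr : AEMeasurable (fun ω => (W ω : ℝ)) P := by fun_prop
  refine (measure_lt_le_exp_mul_lintegral_exp ((hYr.sub hZr).sub hWr) hα t).trans ?_
  refine (mul_le_mul_right (lintegral_exp_sub_sub_le hYr hZr hWr α) _).trans_eq ?_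
  rw [lintegral_exp_mul_of_negBinPMF hm hrho hrhoα hY hYlaw,
    lintegral_exp_mul_of_negBinPMF hn hlam hlamα hZ hZlaw,
    lintegral_exp_mul_of_negBinPMF hk hmu hmuα hW hWlaw]
  simp (discharger := positivity) only [ENNReal.ofReal_rpow_of_nonneg, ← Real.rpow_mul,
    ← ENNReal.ofReal_mul, mul_one_div, ← mul_assoc]

end

/-- The explicit exponential-Chebyshev estimate behind Lemma 3.4: for `0 < lam < rho`,
integers `u ≥ 1`, `d ≥ 0`, and `0 < α < (1/4) log((1+lam)/lam)`, and random variables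
`Y, Z, W` (arbitrary joint law) with the prescribed negative binomial marginals,
`P(Y - Z - W < u(rho-lam) + d)` is bounded by
`exp(αu(rho-lam) + dα) (1+rho(1-e^{-4α}))^{-(2u-1)/4} (1+lam(1-e^{4α}))^{-(2u-1)/4}
 (1+lam(1-e^{2α}))^{-1}`. -/
theorem second_class_density_exponential_bound
    (rho lam : ℝ) (hlam : 0 < lam) (hll : lam < rho)
    (u d : ℕ) (hu : 1 ≤ u)
    (α : ℝ) (hα : 0 < α) (hα' : α < (1 / 4) * Real.log ((1 + lam) / lam))
    (Ω : Type*) [MeasurableSpace Ω] (P : Measure Ω) [IsProbabilityMeasure P]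
    (Y Z W : Ω → ℕ)
    (hY : Measurable Y) (hZ : Measurable Z) (hW : Measurable W)
    (hYlaw : ∀ k : ℕ, P {ω | Y ω = k} = ENNReal.ofReal (negBinPMF (2 * u - 1) rho k))
    (hZlaw : ∀ k : ℕ, P {ω | Z ω = k} = ENNReal.ofReal (negBinPMF (2 * u - 1) lam k))
    (hWlaw : ∀ k : ℕ, P {ω | W ω = k} = ENNReal.ofReal (negBinPMF 2 lam k)) :
    P {ω | ((Y ω : ℝ) - (Z ω : ℝ) - (W ω : ℝ)) < (u : ℝ) * (rho - lam) + (d : ℝ)} ≤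
      ENNReal.ofReal
        (Real.exp (α * (u : ℝ) * (rho - lam) + (d : ℝ) * α) *
          (1 + rho * (1 - Real.exp (-4 * α))) ^ (-(2 * (u : ℝ) - 1) / 4) *
          (1 + lam * (1 - Real.exp (4 * α))) ^ (-(2 * (u : ℝ) - 1) / 4) *
          (1 + lam * (1 - Real.exp (2 * α)))⁻¹) := by
  convert second_class_density_exponential_bound_general (hlam.trans hll).le hlam.le hlam.le
    (by lia) (by lia) two_ne_zero hα.le (mul_exp_lt_one_add_of_lt_log hlam (by linarith))
    (mul_exp_lt_one_add_of_lt_log hlam (by linarith)) hY.aemeasurable hZ.aemeasurable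
    hW.aemeasurable hYlaw hZlaw hWlaw (u * (rho - lam) + d) using 2
  rw [show α * u * (rho - lam) + d * α = α * (u * (rho - lam) + d) by ring]
  simp [Nat.cast_sub (show 1 ≤ 2 * u by lia), Real.rpow_neg_one]
end

section
/- Let n ≥ 1 be an integer and 0 < λ ≤ ρ. With m^λ_n(z) = C(n+z−1, n−1)·(λ/(1+λ))^z·(1/(1+λ))^n and m^ρ_n defined analogously, the series Σ_{z=0}^{∞} m^λ_n(z)²/m^ρ_n(z) converges and equals (1 − (ρ−λ)²/(ρ(1+ρ)))^{−n}. -/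
/-!
The two mass functions share their binomial coefficient, so each term of the series is that
coefficient times `r ^ z * s ^ n`, where `r = lam ^ 2 * (1 + rho) / ((1 + lam) ^ 2 * rho)` and
`s = (1 + rho) / (1 + lam) ^ 2`. For `|r| < 1` the negative binomial series evaluates the sum as
`((1 - r) / s) ^ (-n)`, and `(1 - r) / s = 1 - (rho - lam) ^ 2 / (rho * (1 + rho))`.
-/

theorem hasSum_choose_pred_mul_geometric_of_norm_lt_one {𝕜 : Type*} [NormedDivisionRing 𝕜]
    {n : ℕ} (hn : n ≠ 0) {r : 𝕜} (hr : ‖r‖ < 1) :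
    HasSum (fun z : ℕ ↦ ((n + z - 1).choose (n - 1) : 𝕜) * r ^ z) ((1 - r) ^ n)⁻¹ := by
  obtain ⟨k, rfl⟩ := Nat.exists_eq_succ_of_ne_zero hn
  simpa [Nat.succ_add, add_comm] using hasSum_choose_mul_geometric_of_norm_lt_one k hr

theorem negBinPMF_sq_div_negBinPMF (n : ℕ) (lam rho : ℝ) (z : ℕ) :
    negBinPMF n lam z ^ 2 / negBinPMF n rho z =
      ((n + z - 1).choose (n - 1) : ℝ) * (lam ^ 2 * (1 + rho) / ((1 + lam) ^ 2 * rho)) ^ z *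
        ((1 + rho) / (1 + lam) ^ 2) ^ n := by
  have ratio_eq : lam ^ 2 * (1 + rho) / ((1 + lam) ^ 2 * rho) =
      (lam / (1 + lam)) ^ 2 / (rho / (1 + rho)) := by
    rw [div_pow, div_div_div_eq]
  have scale_eq : (1 + rho) / (1 + lam) ^ 2 = (1 / (1 + lam)) ^ 2 / (1 / (1 + rho)) := by
    rw [div_pow, div_div_div_eq, one_pow, one_mul, mul_one]
  simp only [negBinPMF]
  generalize ((n + z - 1).choose (n - 1) : ℝ) = c
  rw [ratio_eq, scale_eq, div_pow (_ ^ 2) _ z, div_pow (_ ^ 2) _ n, pow_right_comm _ 2 z,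
    pow_right_comm _ 2 n, mul_pow, mul_pow, mul_div_mul_comm, mul_div_mul_comm, pow_two c,
    mul_self_div_self]

theorem one_sub_ratio_div_scale {K : Type*} [Field K] {lam rho : K}
    (hlam : 1 + lam ≠ 0) (hrho : rho ≠ 0) (hrho' : 1 + rho ≠ 0) :
    (1 - lam ^ 2 * (1 + rho) / ((1 + lam) ^ 2 * rho)) / ((1 + rho) / (1 + lam) ^ 2) =
      1 - (rho - lam) ^ 2 / (rho * (1 + rho)) := by
  field_simp
  ring

theorem sq_mul_one_add_lt_one_add_sq_mul {R : Type*} [CommRing R] [LinearOrder R]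
    [IsStrictOrderedRing R] {lam rho : R} (hlam : 0 ≤ lam) (hrho : 0 < rho) (hle : lam ≤ rho) :
    lam ^ 2 * (1 + rho) < (1 + lam) ^ 2 * rho := by
  have hsq : lam ^ 2 ≤ lam * rho := by
    rw [pow_two]; gcongr
  have hmul : 0 ≤ lam * rho := by positivity
  linarith

theorem chi_squared_negBinomial_general {n : ℕ} (hn : n ≠ 0) {lam rho : ℝ}
    (hlam : 1 + lam ≠ 0) (hrho : rho ≠ 0) (hrho' : 1 + rho ≠ 0)
    (hr : |lam ^ 2 * (1 + rho) / ((1 + lam) ^ 2 * rho)| < 1) :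
    HasSum (fun z : ℕ ↦ negBinPMF n lam z ^ 2 / negBinPMF n rho z)
      ((1 - (rho - lam) ^ 2 / (rho * (1 + rho))) ^ n)⁻¹ := by
  have sum_eq : ((1 - (rho - lam) ^ 2 / (rho * (1 + rho))) ^ n)⁻¹ =
      ((1 - lam ^ 2 * (1 + rho) / ((1 + lam) ^ 2 * rho)) ^ n)⁻¹ *
        ((1 + rho) / (1 + lam) ^ 2) ^ n := by
    rw [← one_sub_ratio_div_scale hlam hrho hrho', div_pow _ ((1 + rho) / _), inv_div,
      div_eq_inv_mul]
  rw [← Real.norm_eq_abs] at hr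
  simp_rw [negBinPMF_sq_div_negBinPMF, sum_eq]
  exact (hasSum_choose_pred_mul_geometric_of_norm_lt_one hn hr).mul_right _

/-- For `n ≥ 1` and `0 < lam ≤ rho`, the series `∑_z m^lam_n(z)² / m^rho_n(z)` converges
and equals `(1 - (rho-lam)²/(rho(1+rho)))^{-n}`. -/
theorem chi_squared_negBinomial
    (n : ℕ) (hn : 1 ≤ n) (lam rho : ℝ) (hlam : 0 < lam) (hle : lam ≤ rho) :
    HasSum (fun z : ℕ => (negBinPMF n lam z) ^ 2 / negBinPMF n rho z)
      (((1 - (rho - lam) ^ 2 / (rho * (1 + rho))) ^ n)⁻¹) := by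
  have hrho : 0 < rho := hlam.trans_le hle
  refine chi_squared_negBinomial_general (Nat.one_le_iff_ne_zero.mp hn) (by positivity)
    hrho.ne' (by positivity) ?_
  rw [abs_of_pos (by positivity), div_lt_one (by positivity)]
  exact sq_mul_one_add_lt_one_add_sq_mul hlam.le hrho hle
end

section
/- Let n ≥ 1 be an integer and 0 < λ ≤ ρ with (ρ−λ)² ≤ ρ(1+ρ)/2. Then for every function g from the nonnegative integers to [0,1], Σ_{z=0}^{∞} g(z)·m^λ_n(z) ≤ (Σ_{z=0}^{∞} g(z)·m^ρ_n(z))^{1/2} · exp(n(ρ−λ)²/(ρ(1+ρ))). -/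
/-!
Cauchy–Schwarz bounds `∑ g p` by `√(∑ g q)` times the square root of the chi-square sum
`∑ p² / q`, the weight `g` being absorbed by `g² ≤ g`. For two negative binomial mass functions,
`p² / q` is a constant multiple of a third one, so the chi-square sum is that constant, namely
`(1 - x)⁻¹ ^ n ≤ exp (2 n x)` with `x = (rho - lam)² / (rho (1 + rho)) ≤ 1 / 2`.
-/

section CauchySchwarz

variable {ι : Type*}

lemma sq_tsum_le_tsum_mul_tsum_of_sq_le_mul {r f g : ι → ℝ} (hf₀ : ∀ i, 0 ≤ f i)
    (hg₀ : ∀ i, 0 ≤ g i) (hr : ∀ i, r i ^ 2 ≤ f i * g i) (hf : Summable f) (hg : Summable g) :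
    (∑' i, r i) ^ 2 ≤ (∑' i, f i) * ∑' i, g i := by
  have abs_le_add (i : ι) : |r i| ≤ f i + g i :=
    abs_le_of_sq_le_sq (by nlinarith [hr i, hf₀ i, hg₀ i]) (add_nonneg (hf₀ i) (hg₀ i))
  have r_summable : Summable r := (hf.add hg).of_norm_bounded abs_le_add
  refine le_of_tendsto_of_tendsto' (Filter.Tendsto.pow r_summable.hasSum 2)
    (Filter.Tendsto.mul hf.hasSum hg.hasSum) fun s ↦ ?_
  exact Finset.sum_sq_le_sum_mul_sum_of_sq_le_mul s (fun i _ ↦ hf₀ i) (fun i _ ↦ hg₀ i)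
    fun i _ ↦ hr i

lemma tsum_mul_le_sqrt_tsum_mul_sqrt_tsum_sq_div {p q g : ι → ℝ} (hq₀ : ∀ i, 0 ≤ q i)
    (hpq : ∀ i, q i = 0 → p i = 0) (hg₀ : ∀ i, 0 ≤ g i) (hg₁ : ∀ i, g i ≤ 1) (hq : Summable q)
    (hχ : Summable fun i ↦ p i ^ 2 / q i) :
    ∑' i, g i * p i ≤ √(∑' i, g i * q i) * √(∑' i, p i ^ 2 / q i) := by
  have gq_nonneg (i : ι) : 0 ≤ g i * q i := mul_nonneg (hg₀ i) (hq₀ i)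
  have gq_summable : Summable fun i ↦ g i * q i :=
    hq.of_nonneg_of_le gq_nonneg fun i ↦ mul_le_of_le_one_left (hq₀ i) (hg₁ i)
  have sq_le (i : ι) : (g i * p i) ^ 2 ≤ g i * q i * (p i ^ 2 / q i) := calc
    (g i * p i) ^ 2 = g i ^ 2 * p i ^ 2 := mul_pow ..
    _ ≤ g i * p i ^ 2 := by
      gcongr
      exact pow_le_of_le_one (hg₀ i) (hg₁ i) two_ne_zero
    _ = g i * q i * (p i ^ 2 / q i) := by
      rw [mul_assoc, mul_div_cancel_of_imp' fun h ↦ by simp [hpq i h]]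
  rw [← Real.sqrt_mul (tsum_nonneg gq_nonneg)]
  exact Real.le_sqrt_of_sq_le <| sq_tsum_le_tsum_mul_tsum_of_sq_le_mul gq_nonneg
    (fun i ↦ div_nonneg (sq_nonneg _) (hq₀ i)) sq_le gq_summable hχ

end CauchySchwarz

lemma inv_one_sub_le_exp_two_mul {x : ℝ} (hx₀ : 0 ≤ x) (hx : x ≤ 1 / 2) :
    (1 - x)⁻¹ ≤ Real.exp (2 * x) := calc
  (1 - x)⁻¹ ≤ 2 * x + 1 := by
    rw [inv_le_iff_one_le_mul₀ (by linarith)]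
    nlinarith
  _ ≤ Real.exp (2 * x) := Real.add_one_le_exp _

lemma sqrt_inv_one_sub_pow_le_exp {x : ℝ} (hx₀ : 0 ≤ x) (hx : x ≤ 1 / 2) (n : ℕ) :
    √((1 - x)⁻¹ ^ n) ≤ Real.exp (n * x) := by
  refine Real.sqrt_le_iff.2 ⟨(Real.exp_pos _).le, ?_⟩
  calc (1 - x)⁻¹ ^ n ≤ Real.exp (2 * x) ^ n :=
        pow_le_pow_left₀ (inv_nonneg.2 (by linarith)) (inv_one_sub_le_exp_two_mul hx₀ hx) n
    _ = Real.exp (n * x) ^ 2 := by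
      rw [← Real.exp_nat_mul, ← Real.exp_nat_mul]
      push_cast
      ring_nf

section NegativeBinomial

variable {n : ℕ} {a b : ℝ}

lemma negBinPMF_pos (ha : 0 < a) (z : ℕ) : 0 < negBinPMF n a z := by
  have choose_pos : 0 < (n + z - 1).choose (n - 1) := Nat.choose_pos (by omega)
  unfold negBinPMF
  positivity

lemma hasSum_negBinPMF (hn : 1 ≤ n) (ha : 0 ≤ a) : HasSum (negBinPMF n a) 1 := by
  obtain ⟨k, rfl⟩ := Nat.exists_eq_add_of_le' hn
  have ratio_lt_one : ‖a / (1 + a)‖ < 1 := by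
    rw [Real.norm_of_nonneg (by positivity), div_lt_one (by positivity)]
    linarith
  have one_sub_ratio : 1 - a / (1 + a) = 1 / (1 + a) := by field_simp; ring
  have series := (hasSum_choose_mul_geometric_of_norm_lt_one k ratio_lt_one).mul_right
    ((1 / (1 + a)) ^ (k + 1))
  have index (z : ℕ) : k + 1 + z - 1 = z + k := by omega
  rw [one_sub_ratio, one_div_mul_cancel (by positivity)] at series
  convert! series using 2 with z
  rw [negBinPMF, index, Nat.add_sub_cancel]

lemma negBinPMF_sq_div (ha : 0 ≤ a) (hb : 0 < b) (hab : (b - a) ^ 2 < b * (1 + b)) (z : ℕ) :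
    negBinPMF n a z ^ 2 / negBinPMF n b z =
      (1 - (b - a) ^ 2 / (b * (1 + b)))⁻¹ ^ n *
        negBinPMF n (a ^ 2 * (1 + b) / (b * (1 + b) - (b - a) ^ 2)) z := by
  set d := b * (1 + b) - (b - a) ^ 2 with hd
  have d_pos : 0 < d := sub_pos.2 hab
  set c := a ^ 2 * (1 + b) / d with hc
  have one_add_c : 1 + c = b * (1 + a) ^ 2 / d := by
    rw [hc, one_add_div d_pos.ne', hd]
    ring
  have ratio_eq : c / (1 + c) = (a / (1 + a)) ^ 2 / (b / (1 + b)) := by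
    rw [one_add_c, hc]
    field_simp
  have success_eq :
      (1 - (b - a) ^ 2 / (b * (1 + b)))⁻¹ * (1 / (1 + c)) = (1 / (1 + a)) ^ 2 / (1 / (1 + b)) := by
    rw [one_sub_div (by positivity), ← hd, one_add_c]
    field_simp
  have choose_ne_zero : ((n + z - 1).choose (n - 1) : ℝ) ≠ 0 :=
    Nat.cast_ne_zero.2 (Nat.choose_pos (by omega)).ne'
  set C : ℝ := ((n + z - 1).choose (n - 1) : ℝ)
  calc negBinPMF n a z ^ 2 / negBinPMF n b z
      = C ^ 2 / C * ((a / (1 + a)) ^ 2 / (b / (1 + b))) ^ z *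
          ((1 / (1 + a)) ^ 2 / (1 / (1 + b))) ^ n := by
        unfold negBinPMF
        rw [mul_pow, mul_pow, pow_right_comm _ z, pow_right_comm _ n, mul_div_mul_comm,
          mul_div_mul_comm, ← div_pow, ← div_pow]
    _ = (1 - (b - a) ^ 2 / (b * (1 + b)))⁻¹ ^ n * negBinPMF n c z := by
        rw [← ratio_eq, ← success_eq, mul_pow, sq, mul_self_div_self]
        unfold negBinPMF
        ring

lemma hasSum_negBinPMF_sq_div (hn : 1 ≤ n) (ha : 0 ≤ a) (hb : 0 < b)
    (hab : (b - a) ^ 2 < b * (1 + b)) :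
    HasSum (fun z ↦ negBinPMF n a z ^ 2 / negBinPMF n b z)
      ((1 - (b - a) ^ 2 / (b * (1 + b)))⁻¹ ^ n) := by
  have tilt_nonneg : 0 ≤ a ^ 2 * (1 + b) / (b * (1 + b) - (b - a) ^ 2) :=
    div_nonneg (by positivity) (sub_pos.2 hab).le
  simpa only [negBinPMF_sq_div ha hb hab, mul_one] using
    (hasSum_negBinPMF hn tilt_nonneg).mul_left ((1 - (b - a) ^ 2 / (b * (1 + b)))⁻¹ ^ n)

end NegativeBinomial

theorem change_of_measure_inequality_general
    {n : ℕ} (hn : 1 ≤ n) {lam rho : ℝ} (hlam : 0 ≤ lam) (hrho : 0 < rho)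
    (hclose : (rho - lam) ^ 2 ≤ rho * (1 + rho) / 2)
    {g : ℕ → ℝ} (hg₀ : ∀ z, 0 ≤ g z) (hg₁ : ∀ z, g z ≤ 1) :
    ∑' z : ℕ, g z * negBinPMF n lam z ≤
      √(∑' z : ℕ, g z * negBinPMF n rho z) *
        Real.exp (n * (rho - lam) ^ 2 / (rho * (1 + rho))) := by
  have var_pos : 0 < rho * (1 + rho) := by positivity
  have chi_sq := hasSum_negBinPMF_sq_div hn hlam hrho (hclose.trans_lt (half_lt_self var_pos))
  have gap_le : (rho - lam) ^ 2 / (rho * (1 + rho)) ≤ 1 / 2 := by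
    rw [div_le_iff₀ var_pos]
    linarith
  calc ∑' z, g z * negBinPMF n lam z
      ≤ √(∑' z, g z * negBinPMF n rho z) * √(∑' z, negBinPMF n lam z ^ 2 / negBinPMF n rho z) :=
        tsum_mul_le_sqrt_tsum_mul_sqrt_tsum_sq_div (fun z ↦ (negBinPMF_pos hrho z).le)
          (fun z hz ↦ absurd hz (negBinPMF_pos hrho z).ne') hg₀ hg₁
          (hasSum_negBinPMF hn hrho.le).summable chi_sq.summable
    _ ≤ √(∑' z, g z * negBinPMF n rho z) *
          Real.exp (n * (rho - lam) ^ 2 / (rho * (1 + rho))) := by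
        rw [chi_sq.tsum_eq, mul_div_assoc]
        gcongr
        exact sqrt_inv_one_sub_pow_le_exp (by positivity) gap_le n

/-- The change-of-measure inequality underlying Lemma 4.2: for `n ≥ 1`,
`0 < lam ≤ rho` with `(rho-lam)² ≤ rho(1+rho)/2`, and any `g : ℕ → [0,1]`,
`∑_z g(z) m^lam_n(z) ≤ (∑_z g(z) m^rho_n(z))^{1/2} exp(n(rho-lam)²/(rho(1+rho)))`. -/
theorem change_of_measure_inequality
    (n : ℕ) (hn : 1 ≤ n) (lam rho : ℝ) (hlam : 0 < lam) (hle : lam ≤ rho)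
    (hclose : (rho - lam) ^ 2 ≤ rho * (1 + rho) / 2)
    (g : ℕ → ℝ) (hg : ∀ z, 0 ≤ g z ∧ g z ≤ 1) :
    ∑' z : ℕ, g z * negBinPMF n lam z ≤
      Real.sqrt (∑' z : ℕ, g z * negBinPMF n rho z) *
        Real.exp ((n : ℝ) * (rho - lam) ^ 2 / (rho * (1 + rho))) :=
  change_of_measure_inequality_general hn hlam.le (hlam.trans_le hle) hclose
    (fun z ↦ (hg z).1) fun z ↦ (hg z).2
end
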